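/- Let C be a linear code of length n over F_q. Suppose the automorphism group of C is t-transitive, i.e., for every pair of ordered t-tuples of distinct coordinate positions there exist a permutation π of the n coordinate positions, nonzero scalars d_1,…,d_n ∈ F_q^*, and a field automorphism γ of F_q such that the monomial map sending (c_1,…,c_n) to the vector whose i-th coordinate is d_i·γ(c_{π(i)}) maps C onto C and π sends the first t-tuple to the second. Then for every integer i with i ≥ t, the supports of the codewords of Hamming weight i in C form a t-design: the number of distinct supports of weight-i codewords containing a given t-element subset of the coordinate positions is the same for every t-element subset. -/

import Mathlib

open Polynomial Finset

/-!
A monomial map moves supports by its coordinate permutation `π` alone: the support of the image of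
`c` is the `π`-preimage of the support of `c`, and it has the same size. Hence, when `π` carries
`T₁` onto `T₂`, taking preimages injects the weight-`w` supports containing `T₂` into those
containing `T₁`; exchanging `T₁` and `T₂` gives equality of the two counts.
-/

open Function

variable {ι : Type*}

/-- The defining condition of a `t`-design, for a family `𝓑` of blocks in a finite set `ι` of
points: all `t`-element sets of points lie in equally many blocks. Blocks need not have the same
size and are counted without multiplicity. -/
def IsDesign (t : ℕ) (𝓑 : Set (Set ι)) : Prop :=
  ∃ lam, ∀ T : Finset ι, #T = t → {S | S ∈ 𝓑 ∧ ↑T ⊆ S}.ncard = lam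

theorem ncard_blocks_superset_le [Finite ι] {𝓑 : Set (Set ι)} {π : Equiv.Perm ι} {T₁ T₂ : Set ι}
    (h𝓑 : Set.MapsTo (π ⁻¹' ·) 𝓑 𝓑) (hT : π '' T₁ ⊆ T₂) :
    {S | S ∈ 𝓑 ∧ T₂ ⊆ S}.ncard ≤ {S | S ∈ 𝓑 ∧ T₁ ⊆ S}.ncard :=
  Set.ncard_le_ncard_of_injOn (π ⁻¹' ·)
    (fun _ hS => ⟨h𝓑 hS.1, Set.image_subset_iff.1 (hT.trans hS.2)⟩)
    π.surjective.preimage_injective.injOn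

theorem isDesign_of_homogeneous [Finite ι] {t : ℕ} {𝓑 : Set (Set ι)}
    (h : ∀ T₁ T₂ : Finset ι, #T₁ = t → #T₂ = t →
      ∃ π : Equiv.Perm ι, Set.MapsTo (π ⁻¹' ·) 𝓑 𝓑 ∧ π '' T₁ = T₂) :
    IsDesign t 𝓑 := by
  have count_le (T₁ T₂ : Finset ι) (h₁ : #T₁ = t) (h₂ : #T₂ = t) :
      {S | S ∈ 𝓑 ∧ ↑T₂ ⊆ S}.ncard ≤ {S | S ∈ 𝓑 ∧ ↑T₁ ⊆ S}.ncard := by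
    obtain ⟨π, h𝓑, hπ⟩ := h T₁ T₂ h₁ h₂
    exact ncard_blocks_superset_le h𝓑 hπ.subset
  by_cases hex : ∃ T₀ : Finset ι, #T₀ = t
  · obtain ⟨T₀, h₀⟩ := hex
    exact ⟨_, fun T hT => (count_le T₀ T h₀ hT).antisymm (count_le T T₀ hT h₀)⟩
  · exact ⟨0, fun T hT => (hex ⟨T, hT⟩).elim⟩

theorem exists_injective_fin_range_eq {t : ℕ} {T : Finset ι} (hT : #T = t) :
    ∃ a : Fin t → ι, Injective a ∧ Set.range a = T :=
  let e := T.equivFinOfCardEq hT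
  ⟨fun k => e.symm k, Subtype.val_injective.comp e.symm.injective, by
    rw [← Subtype.range_coe (s := (T : Set ι))]
    exact e.symm.surjective.range_comp Subtype.val⟩

theorem exists_image_eq_of_transitive {t : ℕ} {P : Equiv.Perm ι → Prop}
    (h : ∀ a b : Fin t → ι, Injective a → Injective b → ∃ π, P π ∧ ∀ k, π (a k) = b k)
    {T₁ T₂ : Finset ι} (h₁ : #T₁ = t) (h₂ : #T₂ = t) :
    ∃ π, P π ∧ π '' T₁ = T₂ := by
  obtain ⟨a, ha, haT⟩ := exists_injective_fin_range_eq h₁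
  obtain ⟨b, hb, hbT⟩ := exists_injective_fin_range_eq h₂
  obtain ⟨π, hP, hπ⟩ := h a b ha hb
  refine ⟨π, hP, ?_⟩
  rw [← haT, ← hbT, ← Set.range_comp]
  exact congrArg Set.range (funext hπ)

section Code

variable {α : Type*} [Zero α]

theorem support_coordinatewise_comp_perm {φ : ι → α → α} (hφ : ∀ j x, φ j x = 0 ↔ x = 0)
    (π : Equiv.Perm ι) (c : ι → α) :
    support (fun j => φ j (c (π j))) = π ⁻¹' support c :=
  Set.ext fun j => (hφ j _).not

variable [Fintype ι] [DecidableEq α]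

theorem hammingNorm_eq_ncard_support (c : ι → α) : hammingNorm c = (support c).ncard := by
  rw [hammingNorm, ← Set.ncard_coe_finset, coe_filter_univ]
  rfl

/-- The supports of the weight-`w` words of a (not necessarily linear) code `C`: the blocks of the
design that `C` is said to hold in weight `w`. -/
def weightSupports (C : Set (ι → α)) (w : ℕ) : Set (Set ι) :=
  {S | ∃ c ∈ C, hammingNorm c = w ∧ S = support c}

theorem mapsTo_preimage_weightSupports {C : Set (ι → α)} {φ : ι → α → α} {π : Equiv.Perm ι}
    (hφ : ∀ j x, φ j x = 0 ↔ x = 0) (hC : Set.MapsTo (fun c j => φ j (c (π j))) C C) (w : ℕ) :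
    Set.MapsTo (π ⁻¹' ·) (weightSupports C w) (weightSupports C w) := by
  rintro _ ⟨c, hc, rfl, rfl⟩
  have hsupp := support_coordinatewise_comp_perm hφ π c
  refine ⟨_, hC hc, ?_, hsupp.symm⟩
  rw [hammingNorm_eq_ncard_support, hammingNorm_eq_ncard_support, hsupp,
    Set.ncard_preimage_of_injective_subset_range π.injective (by simp)]

/-- The maps `φ j` play the role of `x ↦ d j * γ x`. -/
theorem designs_from_transitive_automorphism_group_general {t : ℕ} {C : Set (ι → α)}
    (hhom : ∀ T₁ T₂ : Finset ι, #T₁ = t → #T₂ = t →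
      ∃ π : Equiv.Perm ι,
        (∃ φ : ι → α → α, (∀ j x, φ j x = 0 ↔ x = 0) ∧
          Set.MapsTo (fun c j => φ j (c (π j))) C C) ∧
        π '' T₁ = T₂) (w : ℕ) :
    IsDesign t (weightSupports C w) :=
  isDesign_of_homogeneous fun T₁ T₂ h₁ h₂ =>
    let ⟨π, ⟨_, hφ, hC⟩, hπ⟩ := hhom T₁ T₂ h₁ h₂
    ⟨π, mapsTo_preimage_weightSupports hφ hC w, hπ⟩

end Code

/-- Let `C` be a linear code of length `n` over `F_q` whose
automorphism group is `t`-transitive: for every pair of ordered `t`-tuples of distinct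
coordinate positions there are a coordinate permutation `π`, nonzero scalars `d_i`, and a
field automorphism `γ` such that the monomial map `c ↦ (i ↦ d_i·γ(c_{π(i)}))` maps `C`
onto `C` and `π` sends the first tuple to the second. Then for every `i ≥ t`, the
supports of the weight-`i` codewords of `C` form a `t`-design. -/
theorem designs_from_transitive_automorphism_group
    (q n t : ℕ) (hq : ∃ p r : ℕ, p.Prime ∧ 0 < r ∧ q = p ^ r)
    (F : Type) [Field F] [Fintype F] [DecidableEq F] (hF : Fintype.card F = q)
    (C : Submodule F (Fin n → F))
    (htrans : ∀ a b : Fin t → Fin n, Function.Injective a → Function.Injective b →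
      ∃ (π : Equiv.Perm (Fin n)) (d : Fin n → Fˣ) (γ : F ≃+* F),
        (fun c : Fin n → F => fun i => (d i : F) * γ (c (π i))) '' (C : Set (Fin n → F)) =
          (C : Set (Fin n → F)) ∧
        ∀ k, π (a k) = b k) :
    ∀ i, t ≤ i →
      ∃ lam, ∀ T : Finset (Fin n), T.card = t →
        {S : Set (Fin n) |
          (∃ c ∈ C, hammingNorm c = i ∧ S = {j | c j ≠ 0}) ∧ ↑T ⊆ S}.ncard = lam := by
  have design (w : ℕ) : IsDesign t (weightSupports (C : Set (Fin n → F)) w) := by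
    refine designs_from_transitive_automorphism_group_general
      (fun _ _ => exists_image_eq_of_transitive fun a b ha hb => ?_) w
    obtain ⟨π, d, γ, hC, hπ⟩ := htrans a b ha hb
    exact ⟨π, ⟨fun j x => d j * γ x, by simp, Set.mapsTo_iff_image_subset.2 hC.subset⟩, hπ⟩
  exact fun i _ => design i
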